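/- arXiv:2309.13497 — 3 statements merged into one kernel-verified Lean document; each statement's English description precedes it below -/
import Mathlib

section
/- For all a, b > 0, c > 1 and t ≥ 0, ∫₀^t [a + b(t−τ)]^{−c} (1+τ)^{−c} dτ ≤ (a+b) 2^c / (b (min{a,b})^c (c−1) (1+t)^c). -/
/-- For all `a, b > 0`, `c > 1` and `t ≥ 0`,
`∫₀^t (a + b(t−τ))^(−c) (1+τ)^(−c) dτ ≤ (a+b) 2^c / (b (min a b)^c (c−1) (1+t)^c)`. -/
theorem integral_convolution_decay_bound (a b c t : ℝ)
    (ha : 0 < a) (hb : 0 < b) (hc : 1 < c) (ht : 0 ≤ t) :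
    (∫ τ in (0 : ℝ)..t, (a + b * (t - τ)) ^ (-c) * (1 + τ) ^ (-c)) ≤
      (a + b) * 2 ^ c / (b * (min a b) ^ c * (c - 1) * (1 + t) ^ c) := by
  have hm : 0 < min a b := lt_min ha hb
  have hma : min a b ≤ a := min_le_left a b
  have hmb : min a b ≤ b := min_le_right a b
  generalize min a b = m at *
  have hc1 : 0 < c - 1 := by linarith
  have pos1 : ∀ τ ∈ Set.uIcc 0 t, 0 < a + b * (t - τ) := by
    intro τ hτ
    rw [Set.uIcc_of_le ht] at hτ
    have := mul_nonneg hb.le (sub_nonneg.2 hτ.2)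
    linarith
  have pos2 : ∀ τ ∈ Set.uIcc 0 t, 0 < 1 + τ := by
    intro τ hτ
    rw [Set.uIcc_of_le ht] at hτ
    linarith [hτ.1]
  have cont1 : ContinuousOn (fun τ : ℝ => (a + b * (t - τ)) ^ (-c)) (Set.uIcc 0 t) :=
    ContinuousOn.rpow_const (by fun_prop) (fun τ hτ => Or.inl (pos1 τ hτ).ne')
  have cont2 : ContinuousOn (fun τ : ℝ => (1 + τ) ^ (-c)) (Set.uIcc 0 t) :=
    ContinuousOn.rpow_const (by fun_prop) (fun τ hτ => Or.inl (pos2 τ hτ).ne')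
  have hK : 0 < ((1 + t) / 2) ^ (-c) := by positivity
  have hbound : ∀ τ ∈ Set.Icc 0 t, (a + b * (t - τ)) ^ (-c) * (1 + τ) ^ (-c) ≤
      ((1 + t) / 2) ^ (-c) * (m ^ (-c) * (1 + τ) ^ (-c) + (a + b * (t - τ)) ^ (-c)) := by
    intro τ hτ
    have p1 := pos1 τ (by rwa [Set.uIcc_of_le ht])
    have p2 := pos2 τ (by rwa [Set.uIcc_of_le ht])
    have q1 : 0 < (a + b * (t - τ)) ^ (-c) := by positivity
    have q2 : 0 < (1 + τ) ^ (-c) := by positivity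
    have q3 : 0 < m ^ (-c) := by positivity
    rcases le_total τ (t / 2) with h | h
    · have h1 : (a + b * (t - τ)) ^ (-c) ≤ (m * ((1 + t) / 2)) ^ (-c) := by
        apply Real.rpow_le_rpow_of_nonpos (by positivity) _ (by linarith)
        have : m * (t - τ) ≤ b * (t - τ) := by gcongr; linarith [hτ.2]
        have : m * ((1 + t) / 2) ≤ m * (1 + (t - τ)) := by gcongr; linarith
        linarith
      rw [Real.mul_rpow hm.le (by positivity)] at h1
      have := mul_le_mul_of_nonneg_right h1 q2.le
      have := mul_pos hK q1
      linarith
    · have h1 : (1 + τ) ^ (-c) ≤ ((1 + t) / 2) ^ (-c) :=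
        Real.rpow_le_rpow_of_nonpos (by positivity) (by linarith) (by linarith)
      have := mul_le_mul_of_nonneg_left h1 q1.le
      have := mul_pos hK (mul_pos q3 q2)
      linarith
  have hderiv : ∀ τ ∈ Set.uIcc 0 t, HasDerivAt
      (fun τ : ℝ => ((1 + t) / 2) ^ (-c) * (-(m ^ (-c) * (1 + τ) ^ (1 - c) / (c - 1))
        + (a + b * (t - τ)) ^ (1 - c) / (b * (c - 1))))
      (((1 + t) / 2) ^ (-c) * (m ^ (-c) * (1 + τ) ^ (-c) + (a + b * (t - τ)) ^ (-c))) τ := by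
    intro τ hτ
    have d1 := ((hasDerivAt_id τ).const_add 1).rpow_const (p := 1 - c)
      (Or.inl (pos2 τ hτ).ne')
    have d2 := ((((hasDerivAt_id τ).const_sub t).const_mul b).const_add a).rpow_const
      (p := 1 - c) (Or.inl (pos1 τ hτ).ne')
    have d3 := ((((d1.const_mul (m ^ (-c))).div_const (c - 1)).neg).add
      (d2.div_const (b * (c - 1)))).const_mul (((1 + t) / 2) ^ (-c))
    refine d3.congr_deriv ?_
    have e : 1 - c - 1 = -c := by ring
    simp only [e, id]
    field_simp
    ring
  have hint : IntervalIntegrable (fun τ : ℝ =>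
      ((1 + t) / 2) ^ (-c) * (m ^ (-c) * (1 + τ) ^ (-c) + (a + b * (t - τ)) ^ (-c)))
      MeasureTheory.volume 0 t :=
    (continuousOn_const.mul ((continuousOn_const.mul cont2).add cont1)).intervalIntegrable
  refine (intervalIntegral.integral_mono_on ht (cont1.mul cont2).intervalIntegrable
    hint hbound).trans ?_
  rw [intervalIntegral.integral_eq_sub_of_hasDerivAt hderiv hint, ← mul_sub]
  have hfin : (a + b) * 2 ^ c / (b * m ^ c * (c - 1) * (1 + t) ^ c)
      = ((1 + t) / 2) ^ (-c) * (m ^ (-c) * (a + b) / (b * (c - 1))) := by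
    rw [Real.rpow_neg (by positivity), Real.rpow_neg hm.le,
      Real.div_rpow (by positivity) (by norm_num)]
    field_simp
  rw [hfin]
  apply mul_le_mul_of_nonneg_left _ hK.le
  have h1 : a ^ (1 - c) ≤ a * m ^ (-c) := by
    rw [sub_eq_add_neg, Real.rpow_add ha, Real.rpow_one]
    exact mul_le_mul_of_nonneg_left
      (Real.rpow_le_rpow_of_nonpos hm hma (by linarith)) ha.le
  have h2 : 0 ≤ m ^ (-c) * (1 + t) ^ (1 - c) / (c - 1) := by positivity
  have h3 : 0 ≤ (a + b * t) ^ (1 - c) / (b * (c - 1)) := by positivity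
  have h4 : a ^ (1 - c) / (b * (c - 1)) ≤ a * m ^ (-c) / (b * (c - 1)) := by gcongr
  have h5 : m ^ (-c) * (a + b) / (b * (c - 1))
      = a * m ^ (-c) / (b * (c - 1)) + m ^ (-c) / (c - 1) := by
    field_simp
  simp only [sub_self, mul_zero, add_zero, sub_zero, Real.one_rpow, mul_one]
  linarith
end

section
/- For every real r ≥ 0, ∑_{α=0}^∞ r^{2α}/α!! ≤ (1+r²) e^{r⁴/2}. -/
open Nat

lemma dfact_le_succ (k : ℕ) : (2 * k)‼ ≤ (2 * k + 1)‼ := by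
  induction k with
  | zero => simp
  | succ k ih =>
    have h1 : (2 * (k + 1))‼ = (2 * k + 2) * (2 * k)‼ := doubleFactorial_add_two (2 * k)
    have h2 : (2 * (k + 1) + 1)‼ = (2 * k + 1 + 2) * (2 * k + 1)‼ :=
      doubleFactorial_add_two (2 * k + 1)
    rw [h1, h2]
    exact Nat.mul_le_mul (by omega) ih

/-- For every real `r ≥ 0`, `∑_{α=0}^∞ r^(2α)/α!! ≤ (1+r²) e^(r⁴/2)`. -/
theorem tsum_sq_div_doubleFactorial_le (r : ℝ) (hr : 0 ≤ r) :
    (∑' α : ℕ, r ^ (2 * α) / (α‼ : ℝ)) ≤ (1 + r ^ 2) * Real.exp (r ^ 4 / 2) := by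
  have hE := NormedSpace.expSeries_div_hasSum_exp (r ^ 4 / 2 : ℝ)
  rw [← Real.exp_eq_exp_ℝ] at hE
  have hev : ∀ k : ℕ, r ^ (2 * (2 * k)) / ((2 * k)‼ : ℝ) = (r ^ 4 / 2) ^ k / (k ! : ℝ) := by
    intro k
    rw [doubleFactorial_two_mul, div_pow, div_div, ← pow_mul]
    push_cast
    congr 2
    ring
  have hod : ∀ k : ℕ, r ^ (2 * (2 * k + 1)) / ((2 * k + 1)‼ : ℝ)
      ≤ r ^ 2 * ((r ^ 4 / 2) ^ k / (k ! : ℝ)) := by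
    intro k
    have h0 : (0 : ℝ) < ((2 * k)‼ : ℝ) := by exact_mod_cast doubleFactorial_pos _
    have h1 : ((2 * k)‼ : ℝ) ≤ ((2 * k + 1)‼ : ℝ) := by exact_mod_cast dfact_le_succ k
    rw [← hev, ← mul_div_assoc, ← pow_add, show 2 + 2 * (2 * k) = 2 * (2 * k + 1) by ring]
    exact div_le_div_of_nonneg_left (by positivity) h0 h1
  have hE2 := hE.mul_left (r ^ 2)
  have se : HasSum (fun k : ℕ => r ^ (2 * (2 * k)) / ((2 * k)‼ : ℝ)) (Real.exp (r ^ 4 / 2)) := by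
    simp_rw [hev]; exact hE
  have so : Summable (fun k : ℕ => r ^ (2 * (2 * k + 1)) / ((2 * k + 1)‼ : ℝ)) :=
    Summable.of_nonneg_of_le (fun k => by positivity) hod hE2.summable
  rw [← tsum_even_add_odd (f := fun α : ℕ => r ^ (2 * α) / (α‼ : ℝ)) se.summable so, se.tsum_eq]
  have := so.tsum_le_tsum hod hE2.summable
  rw [hE2.tsum_eq] at this
  linarith
end

section
/- For all r₁, r₂ > 0 and every φ ∈ ℤ, ∑_{ψ∈ℤ} r₂^{|ψ|} r₁^{|φ−ψ|} / (|ψ|! |φ−ψ|!) ≤ (1 + e^{r₁+r₂}) (r₁+r₂)^{|φ|} / |φ|!. -/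
lemma aux_fact (j : ℕ) : 2 * (2 * (j + 1)).factorial ≤
    4 ^ (j + 1) * ((j + 1).factorial * (j + 1).factorial) := by
  have h1 : (2 * (j + 1)).choose (j + 1) = 2 * (2 * j + 1).choose j := by
    rw [show 2 * (j + 1) = (2 * j + 1) + 1 by ring, Nat.choose_succ_succ,
      Nat.choose_symm_half]
    ring
  have h2 := Nat.choose_middle_le_pow j
  have h3 : (2 * (j + 1)).choose (j + 1) * (j + 1).factorial * (j + 1).factorial
      = (2 * (j + 1)).factorial := by
    have := Nat.choose_mul_factorial_mul_factorial (show j + 1 ≤ 2 * (j + 1) by omega)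
    rwa [show 2 * (j + 1) - (j + 1) = j + 1 by omega] at this
  rw [← h3, h1]
  calc 2 * (2 * (2 * j + 1).choose j * (j + 1).factorial * (j + 1).factorial)
      = 4 * (2 * j + 1).choose j * ((j + 1).factorial * (j + 1).factorial) := by ring
    _ ≤ 4 * 4 ^ j * ((j + 1).factorial * (j + 1).factorial) := by gcongr
    _ = _ := by ring

lemma aux_key (a b : ℝ) (ha : 0 < a) (hb : 0 < b) (n j : ℕ) :
    b ^ (n + (j + 1)) * a ^ (j + 1) / (((n + (j + 1)).factorial : ℝ) * ((j + 1).factorial : ℝ)) +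
    b ^ (j + 1) * a ^ (n + (j + 1)) / (((j + 1).factorial : ℝ) * ((n + (j + 1)).factorial : ℝ))
    ≤ (a + b) ^ n / (n.factorial : ℝ) *
      ((a + b) ^ (2 * (j + 1)) / ((2 * (j + 1)).factorial : ℝ)) := by
  have hF : (2 : ℝ) * ((2 * (j + 1)).factorial : ℝ) ≤
    4 ^ (j + 1) * (((j + 1).factorial : ℝ) * ((j + 1).factorial : ℝ)) := by
    exact_mod_cast aux_fact j
  have hG : (n.factorial : ℝ) * ((j + 1).factorial : ℝ) ≤ ((n + (j + 1)).factorial : ℝ) := by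
    exact_mod_cast Nat.le_of_dvd (Nat.factorial_pos _)
      (Nat.factorial_mul_factorial_dvd_factorial_add n (j + 1))
  generalize j + 1 = k at *
  have hn : (0 : ℝ) < n.factorial := by positivity
  have hk : (0 : ℝ) < k.factorial := by positivity
  have hk2 : (0 : ℝ) < (2 * k).factorial := by positivity
  have hnk : (0 : ℝ) < (n + k).factorial := by positivity
  have e1 : (4 * (a * b)) ^ k ≤ (a + b) ^ (2 * k) := by
    rw [pow_mul]
    gcongr
    nlinarith [sq_nonneg (a - b)]
  have e2 : a ^ n + b ^ n ≤ 2 * (a + b) ^ n := by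
    have : a ^ n ≤ (a + b) ^ n := by gcongr; linarith
    have : b ^ n ≤ (a + b) ^ n := by gcongr; linarith
    linarith
  generalize (n.factorial : ℝ) = N at *
  generalize (k.factorial : ℝ) = K at *
  generalize ((2 * k).factorial : ℝ) = M at *
  generalize ((n + k).factorial : ℝ) = L at *
  have e : b ^ (n + k) * a ^ k / (L * K) + b ^ k * a ^ (n + k) / (K * L)
      = (a * b) ^ k * (a ^ n + b ^ n) / (L * K) := by
    field_simp; ring
  rw [e, div_mul_div_comm, div_le_div_iff₀ (by positivity) (by positivity)]
  have h4 : (0 : ℝ) < 4 ^ k := by positivity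
  refine le_of_mul_le_mul_left ?_ h4
  calc 4 ^ k * ((a * b) ^ k * (a ^ n + b ^ n) * (N * M))
      = (4 * (a * b)) ^ k * (a ^ n + b ^ n) * (N * M) := by rw [mul_pow 4]; ring
    _ ≤ (a + b) ^ (2 * k) * (2 * (a + b) ^ n) * (N * M) := by gcongr
    _ = (a + b) ^ (2 * k) * (a + b) ^ n * N * (2 * M) := by ring
    _ ≤ (a + b) ^ (2 * k) * (a + b) ^ n * N * (4 ^ k * (K * K)) := by gcongr
    _ = (a + b) ^ (2 * k) * (a + b) ^ n * 4 ^ k * K * (N * K) := by ring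
    _ ≤ (a + b) ^ (2 * k) * (a + b) ^ n * 4 ^ k * K * L := by gcongr
    _ = _ := by ring

lemma aux_nat (r₁ r₂ : ℝ) (h₁ : 0 < r₁) (h₂ : 0 < r₂) (n : ℕ) :
    (∑' ψ : ℤ, r₂ ^ ψ.natAbs * r₁ ^ ((n : ℤ) - ψ).natAbs /
        ((ψ.natAbs.factorial : ℝ) * (((n : ℤ) - ψ).natAbs.factorial : ℝ))) ≤
      (1 + Real.exp (r₁ + r₂)) * (r₁ + r₂) ^ n / (n.factorial : ℝ) := by
  set f : ℤ → ℝ := fun ψ => r₂ ^ ψ.natAbs * r₁ ^ ((n : ℤ) - ψ).natAbs /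
        ((ψ.natAbs.factorial : ℝ) * (((n : ℤ) - ψ).natAbs.factorial : ℝ)) with hf
  have hpos : ∀ ψ, 0 ≤ f ψ := fun ψ => by simp only [hf]; positivity
  have hE : HasSum (fun m : ℕ => (r₁ + r₂) ^ m / (m.factorial : ℝ)) (Real.exp (r₁ + r₂)) := by
    rw [Real.exp_eq_exp_ℝ]
    exact NormedSpace.expSeries_div_hasSum_exp (r₁ + r₂)
  have hinj : Function.Injective (fun j : ℕ => 2 * (j + 1)) := fun x y h => by
    simp only at h; omega
  have hS := hE.summable.comp_injective hinj
  have hle : ∑' j : ℕ, (r₁ + r₂) ^ (2 * (j + 1)) / ((2 * (j + 1)).factorial : ℝ)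
      ≤ Real.exp (r₁ + r₂) := by
    rw [← hE.tsum_eq]
    exact tsum_comp_le_tsum_of_inj hE.summable (fun m => by positivity) hinj
  have hS' := hS.mul_left ((r₁ + r₂) ^ n / (n.factorial : ℝ))
  have hAB : ∀ j : ℕ, f ((j + (n + 1) : ℕ) : ℤ) + f (-((j : ℤ) + 1)) ≤
      (r₁ + r₂) ^ n / (n.factorial : ℝ) *
      ((r₁ + r₂) ^ (2 * (j + 1)) / ((2 * (j + 1)).factorial : ℝ)) := by
    intro j
    have := aux_key r₁ r₂ h₁ h₂ n j
    simp only [hf]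
    rw [show ((j + (n + 1) : ℕ) : ℤ).natAbs = n + (j + 1) by omega,
      show ((n : ℤ) - ((j + (n + 1) : ℕ) : ℤ)).natAbs = j + 1 by omega,
      show (-((j : ℤ) + 1)).natAbs = j + 1 by omega,
      show ((n : ℤ) - -((j : ℤ) + 1)).natAbs = n + (j + 1) by omega]
    exact this
  have hA : Summable (fun j : ℕ => f ((j + (n + 1) : ℕ) : ℤ)) :=
    Summable.of_nonneg_of_le (fun j => hpos _)
      (fun j => by have := hAB j; have := hpos (-((j : ℤ) + 1)); simp only [Function.comp]; linarith) hS'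
  have hB : Summable (fun j : ℕ => f (-((j : ℤ) + 1))) :=
    Summable.of_nonneg_of_le (fun j => hpos _)
      (fun j => by
        have := hAB j; have := hpos ((j + (n + 1) : ℕ) : ℤ); simp only [Function.comp]; linarith) hS'
  have hN : Summable (fun j : ℕ => f (j : ℤ)) :=
    (summable_nat_add_iff (f := fun j : ℕ => f (j : ℤ)) (n + 1)).1 hA
  have hfin : ∑ i ∈ Finset.range (n + 1), f (i : ℤ) = (r₁ + r₂) ^ n / (n.factorial : ℝ) := by
    rw [add_comm r₁, add_pow, Finset.sum_div]
    refine Finset.sum_congr rfl fun i hi => ?_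
    have hi' : i ≤ n := by have := Finset.mem_range.1 hi; omega
    simp only [hf]
    rw [show ((i : ℤ)).natAbs = i by omega, show ((n : ℤ) - (i : ℤ)).natAbs = n - i by omega]
    have := Nat.choose_mul_factorial_mul_factorial hi'
    have h' : (n.choose i : ℝ) * i.factorial * (n - i).factorial = n.factorial := by
      exact_mod_cast this
    rw [← h']
    have : (0 : ℝ) < n.choose i := by exact_mod_cast Nat.choose_pos hi'
    field_simp
  rw [(HasSum.of_nat_of_neg_add_one hN.hasSum hB.hasSum).tsum_eq,
    ← hN.sum_add_tsum_nat_add (n + 1), hfin, add_assoc, ← hA.tsum_add hB]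
  have h3 := (hA.add hB).tsum_le_tsum hAB hS'
  rw [tsum_mul_left] at h3
  have h4 : (r₁ + r₂) ^ n / (n.factorial : ℝ) *
      ∑' j : ℕ, (r₁ + r₂) ^ (2 * (j + 1)) / ((2 * (j + 1)).factorial : ℝ) ≤
      (r₁ + r₂) ^ n / (n.factorial : ℝ) * Real.exp (r₁ + r₂) := by gcongr
  calc _ ≤ (r₁ + r₂) ^ n / (n.factorial : ℝ) +
        (r₁ + r₂) ^ n / (n.factorial : ℝ) * Real.exp (r₁ + r₂) := by
        gcongr; exact h3.trans h4
    _ = _ := by ring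


/-- For all `r₁, r₂ > 0` and every `φ ∈ ℤ`,
`∑_{ψ∈ℤ} r₂^|ψ| r₁^|φ−ψ| / (|ψ|! |φ−ψ|!) ≤ (1 + e^(r₁+r₂)) (r₁+r₂)^|φ| / |φ|!`. -/
theorem tsum_int_convolution_bound (r₁ r₂ : ℝ) (h₁ : 0 < r₁) (h₂ : 0 < r₂) (φ : ℤ) :
    (∑' ψ : ℤ, r₂ ^ ψ.natAbs * r₁ ^ (φ - ψ).natAbs /
        ((ψ.natAbs.factorial : ℝ) * ((φ - ψ).natAbs.factorial : ℝ))) ≤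
      (1 + Real.exp (r₁ + r₂)) * (r₁ + r₂) ^ φ.natAbs / (φ.natAbs.factorial : ℝ) := by

  obtain ⟨n, rfl | rfl⟩ := φ.eq_nat_or_neg
  · simpa using aux_nat r₁ r₂ h₁ h₂ n
  · have h := aux_nat r₁ r₂ h₁ h₂ n
    rw [← (Equiv.neg ℤ).tsum_eq]
    have e : ∀ ψ : ℤ, (-(n : ℤ) - -ψ).natAbs = ((n : ℤ) - ψ).natAbs := fun ψ => by omega
    simpa only [Equiv.neg_apply, Int.natAbs_neg, e, Int.natAbs_natCast] using h
end
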